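/- Let C ≥ 0 and suppose f : S¹ → ℝ is representable by a non-negative finite Borel measure with total mass C. Then there exists a unique non-negative finite Borel measure μ on S¹ with μ(S¹) = (1/4)·‖∂₋f‖_TV(S¹) such that the signed measure μ̄ = μ + (C − (1/4)·‖∂₋f‖_TV(S¹))·H¹ is a non-negative measure and f(x) = ∫_{S¹} d_{S¹}(x,y) μ̄(dy) for all x ∈ S¹. -/

import Mathlib

open MeasureTheory Real Filter Set Complex
open scoped ENNReal NNReal Classical

noncomputable section

instance : MeasurableSpace Circle := borel Circle
instance : BorelSpace Circle := ⟨rfl⟩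

namespace CirclePaper

/-- The spherical (arc-length) distance on the unit circle `S¹ ⊆ ℝ² ≃ ℂ`:
`d_{S¹}(x,y) = arccos ⟨x,y⟩ = arccos (Re (x * conj y))`. -/
def dS1 (x y : Circle) : ℝ := Real.arccos (((x : ℂ) * (starRingEnd ℂ) (y : ℂ)).re)

/-- The antipodal map `T x = -x` (multiplication by `exp(iπ) = -1`). -/
def antipode (x : Circle) : Circle := Circle.exp π * x

/-- Integral of a function against a signed measure (via the Jordan decomposition). -/
def sInt (l : SignedMeasure Circle) (f : Circle → ℝ) : ℝ :=
  (∫ y, f y ∂l.toJordanDecomposition.posPart) - (∫ y, f y ∂l.toJordanDecomposition.negPart)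

/-- `f_λ(x) = ∫_{S¹} d_{S¹}(x,y) λ(dy)`. -/
def fRep (l : SignedMeasure Circle) (x : Circle) : ℝ := sInt l (fun y => dS1 x y)

/-- `f : S¹ → ℝ` has left derivative `L` at `x` w.r.t. the covering `q(t) = exp(it)`,
i.e. `(f(x +_q t) - f(x))/t → L` as `t → 0⁻`. -/
def HasLeftDerivCircleAt (f : Circle → ℝ) (L : ℝ) (x : Circle) : Prop :=
  Filter.Tendsto (fun t : ℝ => (f (Circle.exp t * x) - f x) / t)
    (nhdsWithin 0 (Set.Iio 0)) (nhds L)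

/-- `h : ℝ → ℝ` has left derivative `L` at `t`: `(h(t+s) - h(t))/s → L` as `s → 0⁻`. -/
def HasLeftDerivAtR (h : ℝ → ℝ) (L : ℝ) (t : ℝ) : Prop :=
  Filter.Tendsto (fun s : ℝ => (h (t + s) - h t) / s)
    (nhdsWithin 0 (Set.Iio 0)) (nhds L)

/-- The total variation `‖g‖_{TV(S¹)}` of `g : S¹ → ℝ`: the supremum of
`Σ |g(q(t_i)) - g(q(t_{i+1}))|` over partitions `0 = t_0 ≤ … ≤ t_{n+1} = 2π`. -/
def circleTV (g : Circle → ℝ) : ℝ≥0∞ := eVariationOn (g ∘ Circle.exp) (Set.Icc 0 (2 * π))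

/-- `f` is Lipschitz continuous with respect to the spherical distance. -/
def LipschitzCircle (f : Circle → ℝ) : Prop := ∃ K : ℝ, ∀ x y, |f x - f y| ≤ K * dS1 x y

/-- The normalized Hausdorff 1-measure on `S¹`, i.e. the rotation-invariant Borel
probability measure (the pushforward of normalized Lebesgue measure on `[0, 2π)`). -/
def hausOne : Measure Circle :=
  (ENNReal.ofReal (2 * π))⁻¹ • Measure.map Circle.exp (volume.restrict (Set.Ico 0 (2 * π)))

instance : IsFiniteMeasure hausOne := by
  constructor
  have h1 : (Measure.map Circle.exp (volume.restrict (Set.Ico 0 (2 * π)))) Set.univ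
      = volume (Set.Ico 0 (2 * π)) := by
    rw [Measure.map_apply Circle.exp.continuous.measurable MeasurableSet.univ]
    simp
  simp only [hausOne, Measure.smul_apply, smul_eq_mul, h1, Real.volume_Ico]
  refine ENNReal.mul_lt_top ?_ ?_
  · exact ENNReal.inv_lt_top.mpr (ENNReal.ofReal_pos.mpr (by positivity))
  · exact ENNReal.ofReal_lt_top

/-- The half-open arc `[x, T(x)) = {x +_q t : t ∈ [0, π)}` of length `π` starting at `x`. -/
def halfArc (x : Circle) : Set Circle := (fun t : ℝ => Circle.exp t * x) '' Set.Ico 0 π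

/-- A Borel measure on the circle, regarded as a signed measure
(defined to be `0` if the measure is not finite). -/
def msigned (μ : Measure Circle) : SignedMeasure Circle :=
  if h : IsFiniteMeasure μ then @Measure.toSignedMeasure _ _ μ h else 0

/-! Write `T` for the antipodal map and `f_μ = ∫ d(·, y) μ(dy)`. The left derivative of `d(·, y)`
at `x` is `-1` if `y` lies on the half-open half circle `[x, Tx)` and `1` otherwise, so
`∂₋f_μ(x) = μ(S¹) - 2 μ([x, Tx))`, and the increment of `∂₋f_μ` over an arc `[x, y)` is twice the
mass of that arc under `μ - T_* μ`. Hence `‖∂₋f_μ‖_TV = 2 |μ - T_* μ|(S¹) = 4 (μ - T_* μ)⁺(S¹)`,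
since `T` exchanges the positive and negative parts of `μ - T_* μ`.

Because `f_μ + f_{T_* μ}` is the constant `π μ(S¹)`, the function `f_μ` depends only on `μ - T_* μ`
and `μ(S¹)`, and it determines the former. Adding a multiple of the `T`-invariant measure `H¹` does
not change `μ - T_* μ`. Thus `(ν - T_* ν)⁺`, the least measure with the same antisymmetrization as
`ν`, works after `H¹` supplies the missing mass; any other solution dominates it and has the same
mass, so they agree. -/

section IncrementsControlledByMeasure

variable {α E : Type*} [LinearOrder α] [TopologicalSpace α] [OrderClosedTopology α]
  [MeasurableSpace α] [OpensMeasurableSpace α] [PseudoEMetricSpace E] {μ : Measure α}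

lemma sum_measure_Ico_of_monotone {u : ℕ → α} (hu : Monotone u) (n : ℕ) :
    ∑ i ∈ Finset.range n, μ (Ico (u i) (u (i + 1))) = μ (Ico (u 0) (u n)) := by
  induction n with
  | zero => simp
  | succ n ih =>
    rw [Finset.sum_range_succ, ih, ← Ico_union_Ico_eq_Ico (hu n.zero_le) (hu n.le_succ),
      measure_union Ico_disjoint_Ico_same measurableSet_Ico]

lemma eVariationOn_Icc_le_measure_Ico {f : α → E} {a b : α}
    (hf : ∀ s t, a ≤ s → s ≤ t → t ≤ b → edist (f s) (f t) ≤ μ (Ico s t)) :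
    eVariationOn f (Icc a b) ≤ μ (Ico a b) := by
  refine iSup_le fun ⟨n, u, hu, hmem⟩ => ?_
  calc ∑ i ∈ Finset.range n, edist (f (u (i + 1))) (f (u i))
      ≤ ∑ i ∈ Finset.range n, μ (Ico (u i) (u (i + 1))) := by
        gcongr with i
        rw [edist_comm]
        exact hf _ _ (hmem i).1 (hu i.le_succ) (hmem (i + 1)).2
    _ = μ (Ico (u 0) (u n)) := sum_measure_Ico_of_monotone hu n
    _ ≤ μ (Ico a b) := measure_mono (Ico_subset_Ico (hmem 0).1 (hmem n).2)

end IncrementsControlledByMeasure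

lemma measure_Ico_le_eVariationOn_add_of_isOpen_cover {ι E : Type*} [PseudoEMetricSpace E]
    {ρ τ : Measure ℝ} {f : ℝ → E} {a b : ℝ} (hab : a ≤ b) {c : ι → Set ℝ}
    (hc : ∀ i, IsOpen (c i)) (hcov : Icc a b ⊆ ⋃ i, c i)
    (hf : ∀ i s t, s ≤ t → Icc s t ⊆ Icc a b ∩ c i →
      ρ (Ico s t) ≤ edist (f s) (f t) + τ (Ico s t)) :
    ρ (Ico a b) ≤ eVariationOn f (Icc a b) + τ (Ico a b) := by
  obtain ⟨u, hu₀, hu, ⟨n, hun⟩, hsub⟩ := exists_monotone_Icc_subset_open_cover_Icc hab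
    (c := fun i => Subtype.val ⁻¹' c i) (fun i => (hc i).preimage continuous_subtype_val)
    (fun x _ => by simpa using hcov x.2)
  have huR : Monotone fun i => (u i : ℝ) := hu
  have hstep (i : ℕ) : ρ (Ico (u i) (u (i + 1))) ≤
      edist (f (u (i + 1))) (f (u i)) + τ (Ico (u i) (u (i + 1))) := by
    obtain ⟨j, hj⟩ := hsub i
    rw [edist_comm]
    refine hf j _ _ (huR i.le_succ) fun x hx => ?_
    have hxab : x ∈ Icc a b := ⟨(u i).2.1.trans hx.1, hx.2.trans (u (i + 1)).2.2⟩
    exact ⟨hxab, @hj ⟨x, hxab⟩ hx⟩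
  calc ρ (Ico a b)
      = ∑ i ∈ Finset.range n, ρ (Ico (u i) (u (i + 1))) := by
        rw [sum_measure_Ico_of_monotone huR, hu₀, hun n le_rfl]
    _ ≤ ∑ i ∈ Finset.range n, edist (f (u (i + 1))) (f (u i)) +
          ∑ i ∈ Finset.range n, τ (Ico (u i) (u (i + 1))) := by
        rw [← Finset.sum_add_distrib]
        exact Finset.sum_le_sum fun i _ => hstep i
    _ ≤ eVariationOn f (Icc a b) + τ (Ico a b) := by
        rw [sum_measure_Ico_of_monotone huR, hu₀, hun n le_rfl]
        gcongr
        exact eVariationOn.sum_le huR fun i => (u i).2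

lemma exists_isClosed_disjoint_measure_compl_lt {X : Type*} [TopologicalSpace X]
    [TopologicalSpace.PseudoMetrizableSpace X] [MeasurableSpace X] [BorelSpace X] {μ ν : Measure X}
    [IsFiniteMeasure μ] [IsFiniteMeasure ν] (h : μ ⟂ₘ ν) {ε : ℝ≥0∞} (hε : ε ≠ 0) :
    ∃ K L : Set X, IsClosed K ∧ IsClosed L ∧ Disjoint K L ∧ μ Kᶜ < ε ∧ ν Lᶜ < ε := by
  obtain ⟨s, hs, hμs, hνs⟩ := h
  obtain ⟨K, hKs, hK, hμK⟩ := hs.compl.exists_isClosed_sdiff_lt (measure_ne_top μ _) hε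
  obtain ⟨L, hLs, hL, hνL⟩ := hs.exists_isClosed_sdiff_lt (measure_ne_top ν _) hε
  refine ⟨K, L, hK, hL, disjoint_compl_left.mono hKs hLs, ?_, ?_⟩
  · calc μ Kᶜ ≤ μ (s ∪ sᶜ \ K) := measure_mono fun x hx => by by_cases x ∈ s <;> simp_all
      _ ≤ μ s + μ (sᶜ \ K) := measure_union_le _ _
      _ < ε := by rwa [hμs, zero_add]
  · calc ν Lᶜ ≤ ν (sᶜ ∪ s \ L) := measure_mono fun x hx => by by_cases x ∈ s <;> simp_all
      _ ≤ ν sᶜ + ν (s \ L) := measure_union_le _ _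
      _ < ε := by rwa [hνs, zero_add]

section SignedMeasure

variable {X : Type*} [MeasurableSpace X] {σ : SignedMeasure X} {J K : Set X}

lemma posPart_le_enorm_add_negPart (hJ : MeasurableSet J) :
    σ.toJordanDecomposition.posPart J ≤ ‖σ J‖ₑ + σ.toJordanDecomposition.negPart J := by
  have h := σ.apply_eq_posPart_real_sub_negPart_real hJ
  rw [← ofReal_measureReal, ← ofReal_measureReal, ← ofReal_norm,
    ← ENNReal.ofReal_add (norm_nonneg _) measureReal_nonneg]
  refine ENNReal.ofReal_le_ofReal ?_
  linarith [Real.le_norm_self (σ J)]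

lemma totalVariation_le_enorm_add_negPart (hJ : MeasurableSet J) (hJK : J ⊆ K) :
    σ.totalVariation J ≤
      ‖σ J‖ₑ + (2 : ℝ≥0∞) • σ.toJordanDecomposition.negPart.restrict K J := by
  rw [SignedMeasure.totalVariation, Measure.add_apply, Measure.restrict_apply hJ,
    inter_eq_left.2 hJK, smul_eq_mul, two_mul, ← add_assoc]
  gcongr
  exact posPart_le_enorm_add_negPart hJ

lemma totalVariation_le_enorm_add_posPart (hJ : MeasurableSet J) (hJK : J ⊆ K) :
    σ.totalVariation J ≤
      ‖σ J‖ₑ + (2 : ℝ≥0∞) • σ.toJordanDecomposition.posPart.restrict K J := by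
  simpa [SignedMeasure.totalVariation_neg, SignedMeasure.toJordanDecomposition_neg] using
    totalVariation_le_enorm_add_negPart (σ := -σ) hJ hJK

end SignedMeasure

section IncrementsGivenBySignedMeasure

variable {σ : SignedMeasure ℝ} {G : ℝ → ℝ} {a b : ℝ}

lemma totalVariation_Ico_le_eVariationOn_add {K L : Set ℝ} (hab : a ≤ b)
    (hG : ∀ s t, a ≤ s → s ≤ t → t ≤ b → G t - G s = σ (Ico s t))
    (hK : IsClosed K) (hL : IsClosed L) (hKL : Disjoint K L) :
    σ.totalVariation (Ico a b) ≤ eVariationOn G (Icc a b) +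
      (2 * σ.toJordanDecomposition.posPart Kᶜ + 2 * σ.toJordanDecomposition.negPart Lᶜ) := by
  set p := σ.toJordanDecomposition.posPart
  set n := σ.toJordanDecomposition.negPart
  set τ := (2 : ℝ≥0∞) • p.restrict Kᶜ + (2 : ℝ≥0∞) • n.restrict Lᶜ
  have hcover : σ.totalVariation (Ico a b) ≤ eVariationOn G (Icc a b) + τ (Ico a b) := by
    refine measure_Ico_le_eVariationOn_add_of_isOpen_cover hab (c := fun i => cond i Kᶜ Lᶜ)
      (Bool.rec hL.isOpen_compl hK.isOpen_compl) ?_ fun i s t hst hsub => ?_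
    · rw [← union_eq_iUnion, ← compl_inter, hKL.inter_eq, compl_empty]
      exact subset_univ _
    · have hs : a ≤ s := (hsub ⟨le_rfl, hst⟩).1.1
      have ht : t ≤ b := (hsub ⟨hst, le_rfl⟩).1.2
      have hJ : Ico s t ⊆ cond i Kᶜ Lᶜ := fun x hx => (hsub (Ico_subset_Icc_self hx)).2
      rw [edist_comm, edist_eq_enorm_sub, hG s t hs hst ht]
      cases i
      · refine (totalVariation_le_enorm_add_negPart measurableSet_Ico hJ).trans ?_
        gcongr
        exact Measure.le_add_left le_rfl _
      · refine (totalVariation_le_enorm_add_posPart measurableSet_Ico hJ).trans ?_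
        gcongr
        exact Measure.le_add_right le_rfl _
  calc σ.totalVariation (Ico a b) ≤ eVariationOn G (Icc a b) + τ (Ico a b) := hcover
    _ ≤ eVariationOn G (Icc a b) + τ univ := by gcongr; exact subset_univ _
    _ = eVariationOn G (Icc a b) + (2 * p Kᶜ + 2 * n Lᶜ) := by simp [τ]

theorem eVariationOn_Icc_eq_totalVariation_Ico (hab : a ≤ b)
    (hG : ∀ s t, a ≤ s → s ≤ t → t ≤ b → G t - G s = σ (Ico s t)) :
    eVariationOn G (Icc a b) = σ.totalVariation (Ico a b) := by
  refine le_antisymm (eVariationOn_Icc_le_measure_Ico fun s t hs hst ht => ?_) ?_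
  · rw [edist_comm, edist_eq_enorm_sub, hG s t hs hst ht]
    exact σ.enorm_le_totalVariation _
  refine ENNReal.le_of_forall_pos_le_add fun ε hε _ => ?_
  -- The two parts of `σ` almost live on disjoint closed sets `K` and `L`; on an interval
  -- missing one of them, `σ` has nearly constant sign.
  obtain ⟨K, L, hK, hL, hKL, hpK, hnL⟩ := exists_isClosed_disjoint_measure_compl_lt
    σ.toJordanDecomposition.mutuallySingular (ε := (ε / 4 : ℝ≥0)) (by simpa using hε.ne')
  calc σ.totalVariation (Ico a b)
      ≤ eVariationOn G (Icc a b) + (2 * (ε / 4 : ℝ≥0) + 2 * (ε / 4 : ℝ≥0)) := by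
        grw [totalVariation_Ico_le_eVariationOn_add hab hG hK hL hKL, hpK, hnL]
    _ = eVariationOn G (Icc a b) + ε := by
        congr 1
        norm_cast
        ring

end IncrementsGivenBySignedMeasure

instance : Fact (0 < 2 * π) := ⟨two_pi_pos⟩

/-- The representative in `[0, 2π)` of the argument of a point of the circle: a measurable section
of the covering map, used to transport signed measures from the circle to the line. -/
def angle (y : Circle) : ℝ :=
  AddCircle.measurableEquivIco (2 * π) 0 (AddCircle.homeomorphCircle'.symm y)

lemma angle_nonneg (y : Circle) : 0 ≤ angle y :=
  (AddCircle.measurableEquivIco (2 * π) 0 _).2.1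

lemma angle_lt_two_pi (y : Circle) : angle y < 2 * π :=
  (AddCircle.measurableEquivIco (2 * π) 0 _).2.2.trans_eq (zero_add _)

lemma exp_angle (y : Circle) : Circle.exp (angle y) = y := by
  rw [← AddCircle.homeomorphCircle'_apply_mk, ← AddCircle.homeomorphCircle'.eq_symm_apply]
  exact AddCircle.coe_equivIco

lemma measurableEmbedding_angle : MeasurableEmbedding angle :=
  (MeasurableEmbedding.subtype_coe measurableSet_Ico).comp
    (AddCircle.homeomorphCircle'.symm.toMeasurableEquiv.trans
      (AddCircle.measurableEquivIco (2 * π) 0)).measurableEmbedding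

/-- The half-open arc swept counterclockwise from `exp (i s)` to `exp (i t)`; the end point is
excluded because left derivatives only see half-open arcs. -/
def arc (s t : ℝ) : Set Circle := Circle.exp '' Ico s t

lemma angle_preimage_Ico {s t : ℝ} (hs : 0 ≤ s) (ht : t ≤ 2 * π) : angle ⁻¹' Ico s t = arc s t := by
  ext y
  refine ⟨fun hy => ⟨angle y, hy, exp_angle y⟩, ?_⟩
  rintro ⟨w, hw, rfl⟩
  have hangle : angle (Circle.exp w) = w :=
    Circle.exp_injOn_Ico (sub_zero (2 * π)).le ⟨angle_nonneg _, angle_lt_two_pi _⟩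
      ⟨hs.trans hw.1, hw.2.trans_le ht⟩ (exp_angle _)
  rwa [mem_preimage, hangle]

theorem circleTV_eq_totalVariation {σ : SignedMeasure Circle} {g : Circle → ℝ}
    (hg : ∀ s t, 0 ≤ s → s ≤ t → t ≤ 2 * π →
      g (Circle.exp t) - g (Circle.exp s) = σ (arc s t)) :
    circleTV g = σ.totalVariation univ := by
  have hangle : angle ⁻¹' Ico 0 (2 * π) = univ :=
    eq_univ_of_forall fun y => ⟨angle_nonneg y, angle_lt_two_pi y⟩
  calc circleTV g = SignedMeasure.totalVariation (σ.map angle) (Ico 0 (2 * π)) := by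
        refine eVariationOn_Icc_eq_totalVariation_Ico two_pi_pos.le fun s t hs hst ht => ?_
        rw [VectorMeasure.map_apply _ measurableEmbedding_angle.measurable measurableSet_Ico,
          angle_preimage_Ico hs ht]
        exact hg s t hs hst ht
    _ = σ.totalVariation univ := by
        simp only [SignedMeasure.totalVariation_eq_variation]
        rw [measurableEmbedding_angle.variation_map, measurableEmbedding_angle.map_apply, hangle]

lemma eq_zero_of_forall_arc {σ : SignedMeasure Circle}
    (hσ : ∀ s t, 0 ≤ s → s ≤ t → t ≤ 2 * π → σ (arc s t) = 0) : σ = 0 := by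
  have htv : circleTV 0 = σ.totalVariation univ :=
    circleTV_eq_totalVariation fun s t hs hst ht => by simp [hσ s t hs hst ht]
  have hzero : circleTV 0 = 0 :=
    eVariationOn.constant_on fun _ ⟨_, _, hx⟩ _ ⟨_, _, hy⟩ => hx.symm.trans hy
  rw [← VectorMeasure.variation_eq_zero, ← SignedMeasure.totalVariation_eq_variation,
    ← Measure.measure_univ_eq_zero, ← htv, hzero]

section Arc

variable {s t u : ℝ}

lemma measurableSet_arc (h : t ≤ s + 2 * π) : MeasurableSet (arc s t) :=
  measurableSet_Ico.image_of_continuousOn_injOn Circle.exp.continuous.continuousOn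
    (Circle.exp_injOn_Ico (by linarith))

lemma arc_union_arc (hst : s ≤ t) (htu : t ≤ u) : arc s t ∪ arc t u = arc s u := by
  rw [arc, arc, ← image_union, Ico_union_Ico_eq_Ico hst htu, arc]

lemma disjoint_arc_arc (hst : s ≤ t) (htu : t ≤ u) (h : u ≤ s + 2 * π) :
    Disjoint (arc s t) (arc t u) :=
  Ico_disjoint_Ico_same.image (Circle.exp_injOn_Ico (by linarith : u - s ≤ 2 * π))
    (Ico_subset_Ico_right htu) (Ico_subset_Ico_left hst)

lemma measureReal_arc_add_arc (μ : Measure Circle) [IsFiniteMeasure μ] (hst : s ≤ t) (htu : t ≤ u)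
    (h : u ≤ s + 2 * π) : μ.real (arc s t) + μ.real (arc t u) = μ.real (arc s u) := by
  rw [← arc_union_arc hst htu,
    measureReal_union (disjoint_arc_arc hst htu h) (measurableSet_arc (by linarith))]

lemma halfArc_exp (t : ℝ) : halfArc (Circle.exp t) = arc t (t + π) := by
  have hIco : Ico t (t + π) = (· + t) '' Ico 0 π := by
    rw [image_add_const_Ico, zero_add, add_comm]
  simp only [halfArc, arc, hIco, image_image, Circle.exp_add]

lemma antipode_involutive : Function.Involutive antipode := fun x => by
  rw [antipode, antipode, ← mul_assoc, ← Circle.exp_add, ← two_mul, Circle.exp_two_pi, one_mul]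

lemma antipode_exp (t : ℝ) : antipode (Circle.exp t) = Circle.exp (t + π) := by
  rw [antipode, ← Circle.exp_add, add_comm]

lemma continuous_antipode : Continuous antipode := continuous_const.mul continuous_id

lemma antipode_preimage_arc (s t : ℝ) : antipode ⁻¹' arc s t = arc (s + π) (t + π) := by
  rw [← image_eq_preimage_of_inverse antipode_involutive antipode_involutive, arc, arc,
    ← image_add_const_Ico, image_image, image_image]
  exact image_congr fun w _ => antipode_exp w

end Arc

section SphericalDistance

lemma dS1_eq_angle (x y : Circle) : dS1 x y = InnerProductGeometry.angle (x : ℂ) (y : ℂ) := by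
  simp [dS1, InnerProductGeometry.angle, Complex.inner, Circle.norm_coe, mul_comm]

lemma dS1_comm (x y : Circle) : dS1 x y = dS1 y x := by
  rw [dS1_eq_angle, dS1_eq_angle, InnerProductGeometry.angle_comm]

lemma dS1_triangle (x y z : Circle) : dS1 x z ≤ dS1 x y + dS1 y z := by
  simpa only [dS1_eq_angle] using InnerProductGeometry.angle_le_angle_add_angle (x : ℂ) y z

lemma dS1_mul_right (x y z : Circle) : dS1 (x * z) (y * z) = dS1 x y := by
  have h : ((x : ℂ) * z) * (starRingEnd ℂ) (y * z) = x * (starRingEnd ℂ) y := by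
    rw [map_mul, mul_mul_mul_comm, ← Circle.coe_inv_eq_conj z, ← Circle.coe_mul z, mul_inv_cancel,
      Circle.coe_one, mul_one]
  rw [dS1, dS1, Circle.coe_mul, Circle.coe_mul, h]

lemma dS1_exp_exp (s t : ℝ) : dS1 (Circle.exp s) (Circle.exp t) = arccos (Real.cos (s - t)) := by
  rw [dS1, ← Circle.coe_inv_eq_conj, ← Circle.coe_mul, ← Circle.exp_neg, ← Circle.exp_add,
    Circle.coe_exp, Complex.exp_ofReal_mul_I_re, sub_eq_add_neg]

lemma dS1_exp_mul_exp_mul (s t : ℝ) (x : Circle) :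
    dS1 (Circle.exp s * x) (Circle.exp t * x) = arccos (Real.cos (s - t)) := by
  rw [dS1_mul_right, dS1_exp_exp]

lemma dS1_exp_mul_self_le (s : ℝ) (x : Circle) : dS1 (Circle.exp s * x) x ≤ |s| := by
  have h : dS1 (Circle.exp s * x) x = arccos (Real.cos |s|) := by
    rw [Real.cos_abs]
    simpa using dS1_exp_mul_exp_mul s 0 x
  rcases le_total |s| π with hs | hs
  · rw [h, arccos_cos (abs_nonneg s) hs]
  · exact (arccos_le_pi _).trans hs

lemma abs_dS1_exp_mul_sub_le (s : ℝ) (x y : Circle) :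
    |dS1 (Circle.exp s * x) y - dS1 x y| ≤ |s| := by
  have h₁ := dS1_triangle (Circle.exp s * x) x y
  have h₂ := dS1_triangle x (Circle.exp s * x) y
  have h₃ := dS1_comm x (Circle.exp s * x)
  have h₄ := dS1_exp_mul_self_le s x
  rw [abs_le]
  constructor <;> linarith

lemma dS1_antipode_right (x y : Circle) : dS1 x (antipode y) = π - dS1 x y := by
  have h : ((antipode y : Circle) : ℂ) = -y := by simp [antipode]
  rw [dS1_eq_angle, dS1_eq_angle, h, InnerProductGeometry.angle_neg_right]

lemma continuous_dS1_right (x : Circle) : Continuous (dS1 x) := by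
  unfold dS1
  fun_prop

lemma integrable_dS1_right (μ : Measure Circle) [IsFiniteMeasure μ] (x : Circle) :
    Integrable (dS1 x) μ :=
  (continuous_dS1_right x).integrable_of_hasCompactSupport (HasCompactSupport.of_compactSpace _)

end SphericalDistance

section MeasureSub

variable {X Y : Type*} [MeasurableSpace X] [MeasurableSpace Y]

lemma le_measure_sub_add (μ ν : Measure X) [IsFiniteMeasure μ] [IsFiniteMeasure ν] :
    μ ≤ μ - ν + ν := by
  have h : μ + (ν - μ) = μ - ν + ν := by
    rw [← Measure.toSignedMeasure_eq_toSignedMeasure_iff, Measure.toSignedMeasure_add,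
      Measure.toSignedMeasure_add, ← sub_eq_sub_iff_add_eq_add]
    exact Measure.sub_toSignedMeasure_eq_toSignedMeasure_sub
  exact (Measure.le_add_right le_rfl).trans h.le

lemma map_measurableEquiv_sub (e : X ≃ᵐ Y) (μ ν : Measure X) [IsFiniteMeasure μ]
    [IsFiniteMeasure ν] : (μ - ν).map e = μ.map e - ν.map e := by
  refine le_antisymm ?_ (Measure.sub_le_of_le_add ?_)
  · have hsymm : μ - ν ≤ (μ.map e - ν.map e).map e.symm := Measure.sub_le_of_le_add <| calc
      μ = (μ.map e).map e.symm := e.map_symm_map.symm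
      _ ≤ (μ.map e - ν.map e + ν.map e).map e.symm :=
        Measure.map_mono (le_measure_sub_add _ _) e.symm.measurable
      _ = (μ.map e - ν.map e).map e.symm + ν := by
        rw [Measure.map_add _ _ e.symm.measurable, e.map_symm_map]
    exact (Measure.map_mono hsymm e.measurable).trans_eq e.map_map_symm
  · rw [← Measure.map_add _ _ e.measurable]
    exact Measure.map_mono (le_measure_sub_add μ ν) e.measurable

end MeasureSub

section LeftDerivative

lemma hasLeftDerivCircleAt_of_eqOn {f : Circle → ℝ} {x : Circle} {L c δ : ℝ} (hδ : δ < 0)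
    (hf : EqOn (fun t => f (Circle.exp t * x)) (fun t => L * t + c) (Icc δ 0)) :
    HasLeftDerivCircleAt f L x := by
  have hx : f x = c := by simpa using hf ⟨hδ.le, le_rfl⟩
  refine tendsto_const_nhds.congr' ?_
  filter_upwards [Ico_mem_nhdsLT hδ] with t ht
  have hft : f (Circle.exp t * x) = L * t + c := hf (Ico_subset_Icc_self ht)
  rw [hft, hx, add_sub_cancel_right, mul_div_cancel_right₀ L ht.2.ne]

lemma hasLeftDerivCircleAt_dS1_of_mem_halfArc {x y : Circle} (hy : y ∈ halfArc x) :
    HasLeftDerivCircleAt (dS1 · y) (-1) x := by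
  obtain ⟨w, ⟨hw₀, hwπ⟩, rfl⟩ := hy
  refine hasLeftDerivCircleAt_of_eqOn (c := w) (sub_neg.2 hwπ) fun t ht => ?_
  simp only [dS1_exp_mul_exp_mul]
  rw [← Real.cos_neg, arccos_cos] <;> linarith [ht.1, ht.2]

lemma hasLeftDerivCircleAt_dS1_of_notMem_halfArc {x y : Circle} (hy : y ∉ halfArc x) :
    HasLeftDerivCircleAt (dS1 · y) 1 x := by
  set w := angle (y / x)
  have hwy : Circle.exp w * x = y := by rw [exp_angle, div_mul_cancel]
  have hwπ : π ≤ w := not_lt.1 fun hw => hy ⟨w, ⟨angle_nonneg _, hw⟩, hwy⟩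
  refine hasLeftDerivCircleAt_of_eqOn (c := 2 * π - w) (sub_neg.2 (angle_lt_two_pi (y / x)))
    fun t ht => ?_
  simp only [← hwy, dS1_exp_mul_exp_mul]
  rw [← Real.cos_add_two_pi, arccos_cos] <;> linarith [ht.1, ht.2]

lemma measurableSet_halfArc (x : Circle) : MeasurableSet (halfArc x) := by
  rw [← exp_angle x, halfArc_exp]
  exact measurableSet_arc (by linarith [pi_pos])

/-- The function `x ↦ ∫ d(x, y) μ(dy)` represented by a measure `μ`, denoted `f_μ` in the paper. -/
def potential (μ : Measure Circle) (x : Circle) : ℝ := ∫ y, dS1 x y ∂μ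

theorem hasLeftDerivCircleAt_potential (μ : Measure Circle) [IsFiniteMeasure μ] (x : Circle) :
    HasLeftDerivCircleAt (potential μ) (μ.real univ - 2 * μ.real (halfArc x)) x := by
  have hquot (t : ℝ) : (potential μ (Circle.exp t * x) - potential μ x) / t =
      ∫ y, (dS1 (Circle.exp t * x) y - dS1 x y) / t ∂μ := by
    rw [integral_div, integral_sub (integrable_dS1_right μ _) (integrable_dS1_right μ _)]
    rfl
  have hlim : μ.real univ - 2 * μ.real (halfArc x) =
      ∫ y, (1 - (halfArc x).indicator (fun _ => 2) y) ∂μ := by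
    rw [integral_sub (integrable_const _)
      ((integrable_const _).indicator (measurableSet_halfArc x)),
      integral_indicator_const _ (measurableSet_halfArc x)]
    simp [mul_comm]
  rw [HasLeftDerivCircleAt, funext hquot, hlim]
  refine tendsto_integral_filter_of_dominated_convergence (fun _ => 1)
    (Eventually.of_forall fun t => ?_) ?_ (integrable_const _) (ae_of_all _ fun y => ?_)
  · exact (((continuous_dS1_right _).sub (continuous_dS1_right _)).div_const t).aestronglyMeasurable
  · refine Eventually.of_forall fun t => ae_of_all _ fun y => ?_
    rw [norm_div]
    exact div_le_one_of_le₀ (abs_dS1_exp_mul_sub_le t x y) (norm_nonneg t)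
  · by_cases hy : y ∈ halfArc x
    · rw [indicator_of_mem hy, show (1 - 2 : ℝ) = -1 by norm_num]
      exact hasLeftDerivCircleAt_dS1_of_mem_halfArc hy
    · rw [indicator_of_notMem hy, sub_zero]
      exact hasLeftDerivCircleAt_dS1_of_notMem_halfArc hy

end LeftDerivative

section Antisymmetrization

variable {μ ν : Measure Circle} [IsFiniteMeasure μ] [IsFiniteMeasure ν]

/-- The signed measure `μ - T_* μ`, with `T` the antipodal map. It is half of the derivative of
`∂₋f_μ`, so it is exactly the information on `μ` that is visible in `f_μ` up to a constant. -/
def antisymm (μ : Measure Circle) [IsFiniteMeasure μ] : SignedMeasure Circle :=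
  μ.toSignedMeasure - (μ.map antipode).toSignedMeasure

lemma antisymm_arc {s t : ℝ} (hst : t ≤ s + 2 * π) :
    antisymm μ (arc s t) = μ.real (arc s t) - μ.real (arc (s + π) (t + π)) := by
  rw [antisymm, sub_apply, Measure.toSignedMeasure_apply_measurable
      (measurableSet_arc hst), Measure.toSignedMeasure_apply_measurable (measurableSet_arc hst),
    map_measureReal_apply continuous_antipode.measurable (measurableSet_arc hst),
    antipode_preimage_arc]

lemma measureReal_halfArc_sub {s t : ℝ} (hst : s ≤ t) (ht : t ≤ s + 2 * π) :
    μ.real (halfArc (Circle.exp s)) - μ.real (halfArc (Circle.exp t)) = antisymm μ (arc s t) := by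
  rw [antisymm_arc ht, halfArc_exp, halfArc_exp]
  rcases le_total t (s + π) with hπ | hπ
  · have h₁ := measureReal_arc_add_arc μ hst hπ (by linarith)
    have h₂ := measureReal_arc_add_arc μ hπ (add_le_add_left hst π) (by linarith)
    linarith
  · have h₁ := measureReal_arc_add_arc μ (by linarith [pi_pos] : s ≤ s + π) hπ ht
    have h₂ := measureReal_arc_add_arc μ hπ (by linarith [pi_pos] : t ≤ t + π) (by linarith)
    linarith

variable {f' : Circle → ℝ}

theorem leftDeriv_potential_sub (hf' : ∀ x, HasLeftDerivCircleAt (potential μ) (f' x) x) {s t : ℝ}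
    (hst : s ≤ t) (ht : t ≤ s + 2 * π) :
    f' (Circle.exp t) - f' (Circle.exp s) = ((2 : ℝ) • antisymm μ) (arc s t) := by
  have hf (x : Circle) : f' x = μ.real univ - 2 * μ.real (halfArc x) :=
    tendsto_nhds_unique (hf' x) (hasLeftDerivCircleAt_potential μ x)
  rw [hf, hf, smul_apply, ← measureReal_halfArc_sub hst ht, smul_eq_mul]
  ring

lemma antisymm_eq_of_potential_eq (h : potential μ = potential ν) : antisymm μ = antisymm ν := by
  have hν := hasLeftDerivCircleAt_potential ν
  have hμ : ∀ x, HasLeftDerivCircleAt (potential μ) (ν.real univ - 2 * ν.real (halfArc x)) x :=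
    h ▸ hν
  refine sub_eq_zero.1 (eq_zero_of_forall_arc fun s t hs hst ht => ?_)
  have ht' : t ≤ s + 2 * π := by linarith
  have hsmul := (leftDeriv_potential_sub hμ hst ht').symm.trans (leftDeriv_potential_sub hν hst ht')
  simpa [sub_eq_zero] using hsmul

/-- The measure `μ - T_* μ`, truncated at zero: the positive part of `antisymm μ`, and the least
measure whose antisymmetrization is `antisymm μ`. -/
def asymmPart (μ : Measure Circle) : Measure Circle := μ - μ.map antipode

lemma asymmPart_le (ρ : Measure Circle) : asymmPart ρ ≤ ρ := Measure.sub_le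

instance : IsFiniteMeasure (asymmPart μ) := isFiniteMeasure_of_le μ (asymmPart_le μ)

lemma posPart_antisymm : (antisymm μ).toJordanDecomposition.posPart = asymmPart μ := by
  rw [antisymm, Measure.toJordanDecomposition_toSignedMeasure_sub]
  rfl

lemma map_antipode_map_antipode (μ : Measure Circle) : (μ.map antipode).map antipode = μ := by
  rw [Measure.map_map continuous_antipode.measurable continuous_antipode.measurable,
    antipode_involutive.comp_self, Measure.map_id]

lemma map_antipode_asymmPart : (asymmPart μ).map antipode = μ.map antipode - μ := by
  have h : (μ - μ.map antipode).map antipode = μ.map antipode - (μ.map antipode).map antipode :=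
    map_measurableEquiv_sub (MeasurableEquiv.ofInvolutive antipode antipode_involutive
      continuous_antipode.measurable) μ (μ.map antipode)
  rw [asymmPart, h, map_antipode_map_antipode]

lemma negPart_antisymm :
    (antisymm μ).toJordanDecomposition.negPart = (asymmPart μ).map antipode := by
  rw [antisymm, Measure.toJordanDecomposition_toSignedMeasure_sub, map_antipode_asymmPart]
  rfl

lemma antisymm_asymmPart : antisymm (asymmPart μ) = antisymm μ := by
  conv_rhs => rw [← (antisymm μ).toSignedMeasure_toJordanDecomposition]
  simp only [JordanDecomposition.toSignedMeasure, posPart_antisymm, negPart_antisymm]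
  rfl

lemma asymmPart_le_of_antisymm_eq (h : antisymm μ = antisymm ν) : asymmPart ν ≤ μ := by
  rw [← posPart_antisymm, ← h, posPart_antisymm]
  exact asymmPart_le μ

theorem circleTV_leftDeriv_potential (hf' : ∀ x, HasLeftDerivCircleAt (potential μ) (f' x) x) :
    circleTV f' = 4 * asymmPart μ univ := calc
  circleTV f' = SignedMeasure.totalVariation ((2 : ℝ) • antisymm μ) univ :=
    circleTV_eq_totalVariation fun s t hs hst ht =>
      leftDeriv_potential_sub hf' hst (by linarith)
  _ = 2 * (antisymm μ).totalVariation univ := by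
    simp only [SignedMeasure.totalVariation_eq_variation, VectorMeasure.variation_smul]
    simp
  _ = 4 * asymmPart μ univ := by
    rw [SignedMeasure.totalVariation, posPart_antisymm, negPart_antisymm, Measure.add_apply,
      Measure.map_apply continuous_antipode.measurable MeasurableSet.univ, preimage_univ]
    ring

lemma potential_map_antipode (x : Circle) :
    potential (μ.map antipode) x = π * μ.real univ - potential μ x := by
  rw [potential, integral_map continuous_antipode.measurable.aemeasurable
    (continuous_dS1_right x).aestronglyMeasurable]
  simp only [dS1_antipode_right]
  rw [integral_sub (integrable_const _) (integrable_dS1_right μ x), integral_const, smul_eq_mul,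
    mul_comm, potential]

lemma potential_add (x : Circle) : potential (μ + ν) x = potential μ x + potential ν x :=
  integral_add_measure (integrable_dS1_right μ x) (integrable_dS1_right ν x)

theorem potential_eq_of_antisymm_eq (h : antisymm μ = antisymm ν)
    (hmass : μ.real univ = ν.real univ) : potential μ = potential ν := by
  have hsum : μ + ν.map antipode = ν + μ.map antipode := by
    rw [← Measure.toSignedMeasure_eq_toSignedMeasure_iff, Measure.toSignedMeasure_add,
      Measure.toSignedMeasure_add, ← sub_eq_sub_iff_add_eq_add]
    exact h
  funext x
  have hx := congr_arg (potential · x) hsum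
  simp only [potential_add, potential_map_antipode, hmass] at hx
  linarith

end Antisymmetrization

section UniformMeasure

instance : IsProbabilityMeasure hausOne := by
  have hmass : (volume.restrict (Ico 0 (2 * π))).map Circle.exp univ = ENNReal.ofReal (2 * π) := by
    simp [Measure.map_apply Circle.exp.continuous.measurable]
  refine ⟨?_⟩
  rw [hausOne, Measure.smul_apply, hmass, smul_eq_mul]
  exact ENNReal.inv_mul_cancel (ENNReal.ofReal_pos.2 two_pi_pos).ne' ENNReal.ofReal_ne_top

lemma hausOne_map_antipode : hausOne.map antipode = hausOne := by
  set lower := (volume.restrict (Ico 0 π)).map Circle.exp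
  have hexp : Measurable Circle.exp := Circle.exp.continuous.measurable
  have hshift : (volume.restrict (Ico 0 π)).map (· + π) = volume.restrict (Ico π (2 * π)) := by
    have h := (measurePreserving_add_right (volume : Measure ℝ) π).restrict_preimage
      (measurableSet_Ico (a := π) (b := 2 * π))
    rw [preimage_add_const_Ico, sub_self, two_mul, add_sub_cancel_right, ← two_mul] at h
    exact h.map_eq
  have hlower : lower.map antipode = (volume.restrict (Ico π (2 * π))).map Circle.exp := by
    rw [← hshift, Measure.map_map continuous_antipode.measurable hexp,
      Measure.map_map hexp (measurable_add_const π)]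
    congr 1
    exact funext antipode_exp
  have hsplit : (volume.restrict (Ico 0 (2 * π))).map Circle.exp = lower + lower.map antipode := by
    rw [hlower, ← Measure.map_add _ _ hexp,
      ← Measure.restrict_union Ico_disjoint_Ico_same measurableSet_Ico,
      Ico_union_Ico_eq_Ico pi_pos.le (by linarith [pi_pos])]
  rw [hausOne, Measure.map_smul, hsplit, Measure.map_add _ _ continuous_antipode.measurable,
    map_antipode_map_antipode, add_comm]

variable (μ : Measure Circle) [IsFiniteMeasure μ] (c : ℝ≥0)

lemma antisymm_add_smul_hausOne : antisymm (μ + c • hausOne) = antisymm μ := by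
  have hmap : (μ + c • hausOne).map antipode = μ.map antipode + c • hausOne := by
    rw [Measure.map_add _ _ continuous_antipode.measurable, Measure.map_smul, hausOne_map_antipode]
  rw [antisymm, Measure.toSignedMeasure_congr hmap, Measure.toSignedMeasure_add,
    Measure.toSignedMeasure_add, add_sub_add_right_eq_sub, antisymm]

lemma measureReal_add_smul_hausOne : (μ + c • hausOne).real univ = μ.real univ + c := by
  simp [measureReal_add_apply, measureReal_nnreal_smul_apply]

theorem potential_asymmPart_add_smul_hausOne
    (hc : (c : ℝ) = μ.real univ - (asymmPart μ).real univ) :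
    potential (asymmPart μ + c • hausOne) = potential μ := by
  refine potential_eq_of_antisymm_eq ?_ ?_
  · rw [antisymm_add_smul_hausOne, antisymm_asymmPart]
  · rw [measureReal_add_smul_hausOne, hc, add_sub_cancel]

lemma msigned_add_smul_hausOne :
    msigned μ + (c : ℝ) • hausOne.toSignedMeasure = (μ + c • hausOne).toSignedMeasure := by
  rw [msigned, dif_pos ‹_›, Measure.toSignedMeasure_add, Measure.toSignedMeasure_smul]
  rfl

lemma fRep_toSignedMeasure (x : Circle) : fRep μ.toSignedMeasure x = potential μ x := by
  have hJordan : μ.toSignedMeasure.toJordanDecomposition =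
      ⟨μ, 0, Measure.MutuallySingular.zero_right⟩ := by
    apply SignedMeasure.toJordanDecomposition_eq
    simp [JordanDecomposition.toSignedMeasure]
  rw [fRep, sInt, hJordan, integral_zero_measure, sub_zero, potential]

end UniformMeasure

/-- If `f` is representable by a non-negative measure of total mass `C ≥ 0`,
then there is a unique non-negative measure `μ` with `μ(S¹) = (1/4)‖∂₋f‖_{TV(S¹)}` such
that `μ̄ = μ + (C - (1/4)‖∂₋f‖_{TV(S¹)})·H¹` is non-negative and `f = f_{μ̄}`. -/
theorem stmt16 (C : ℝ) (hC : 0 ≤ C) (f : Circle → ℝ)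
    (ν : Measure Circle) (hνfin : IsFiniteMeasure ν)
    (hνmass : ν Set.univ = ENNReal.ofReal C)
    (hν : ∀ x : Circle, f x = ∫ y, dS1 x y ∂ν)
    (f' : Circle → ℝ) (hf' : ∀ x : Circle, HasLeftDerivCircleAt f (f' x) x) :
    ∃! μ : Measure Circle,
      μ Set.univ = ENNReal.ofReal ((circleTV f').toReal / 4) ∧
      0 ≤ msigned μ + (C - (circleTV f').toReal / 4) • hausOne.toSignedMeasure ∧
      ∀ x : Circle,
        f x = fRep (msigned μ + (C - (circleTV f').toReal / 4) • hausOne.toSignedMeasure) x := by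
  obtain rfl : f = potential ν := funext hν
  have hνC : ν.real univ = C := by rw [Measure.real, hνmass, ENNReal.toReal_ofReal hC]
  have hTV : (circleTV f').toReal / 4 = (asymmPart ν).real univ := by
    rw [circleTV_leftDeriv_potential hf', ENNReal.toReal_mul, Measure.real]
    simp
  have hle : (asymmPart ν).real univ ≤ ν.real univ :=
    ENNReal.toReal_mono (measure_ne_top _ _) (asymmPart_le ν univ)
  obtain ⟨c, hc⟩ : ∃ c : ℝ≥0, (c : ℝ) = ν.real univ - (asymmPart ν).real univ :=
    ⟨⟨_, sub_nonneg.2 hle⟩, rfl⟩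
  rw [hTV, ← hνC, ← hc, ofReal_measureReal]
  refine ⟨asymmPart ν, ⟨rfl, ?_, fun x => ?_⟩, ?_⟩
  · rw [msigned_add_smul_hausOne]
    exact Measure.zero_le_toSignedMeasure _
  · rw [msigned_add_smul_hausOne, fRep_toSignedMeasure, potential_asymmPart_add_smul_hausOne _ _ hc]
  · rintro μ ⟨hμmass, -, hμ⟩
    have : IsFiniteMeasure μ := ⟨hμmass ▸ measure_lt_top _ _⟩
    simp only [msigned_add_smul_hausOne, fRep_toSignedMeasure] at hμ
    have hanti : antisymm μ = antisymm ν := by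
      rw [← antisymm_add_smul_hausOne μ c, antisymm_eq_of_potential_eq (funext hμ)]
    exact (Measure.eq_of_le_of_measure_univ_eq (asymmPart_le_of_antisymm_eq hanti) hμmass.symm).symm

end CirclePaper
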